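/- Under Assumptions 3–4 and GT-NSGDm with momentum parameter β ∈ (0,1), for all t = 0, …, T the consensus error of the gradient trackers satisfies (1/n) E[Σ_{i=1}^n ‖y_i^t − ȳ^t‖] ≤ 2√2 · n^{1/2} (1/β − 1) (Σ_{k=0}^t λ^{(t−k+1)p})^{1/p} σ + (1/√n)(1/β − 1) Σ_{k=0}^t λ^{t−k+1} E[‖∇F(x^k) − v^k‖]. -/

import Mathlib

open MeasureTheory

/-!
Since `vᵗ - vᵗ⁻¹ = (1/β - 1)(gᵗ - vᵗ)`, with `J = (1/n) 1 1ᵀ` the tracker recursion unrolls to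
`(I - J) yᵗ = (1/β - 1) ∑ₖ (W - J)ᵗ⁻ᵏ⁺¹ (gᵏ - vᵏ)` for stacked vectors. Split `gᵏ - vᵏ` as
`(gᵏ - ∇F(xᵏ)) + (∇F(xᵏ) - vᵏ)`. The second part is bounded by the triangle inequality. The first
is a martingale difference sequence, so the `p`-th moment of its weighted sum is bounded by the
von Bahr–Esseen inequality. That inequality follows by induction from the tangent-type estimate
`‖a + b‖ᵖ ≤ ‖a‖ᵖ + p ‖a‖ᵖ⁻² ⟪a, b⟫ + (1 + p) ‖b‖ᵖ`, whose middle term has mean zero when `a` is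
the sum so far and `b` the next increment.
-/

section NormRpow

lemma sq_add_rpow_half_le {A h p : ℝ} (hA : 0 < A) (hh : 0 ≤ A ^ 2 + h) (hp0 : 0 ≤ p)
    (hp2 : p ≤ 2) : (A ^ 2 + h) ^ (p / 2) ≤ A ^ p + p / 2 * A ^ (p - 2) * h := by
  have hA2 : 0 < A ^ 2 := by positivity
  have hs : -1 ≤ h / A ^ 2 := by rw [le_div_iff₀ hA2]; linarith
  have hrpow : (A ^ 2) ^ (p / 2) = A ^ p := by
    rw [← Real.rpow_natCast_mul hA.le]; congr 1; push_cast; ring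
  calc (A ^ 2 + h) ^ (p / 2) = A ^ p * (1 + h / A ^ 2) ^ (p / 2) := by
        rw [← hrpow, ← Real.mul_rpow hA2.le (by linarith)]; congr 1; field_simp
    _ ≤ A ^ p * (1 + p / 2 * (h / A ^ 2)) := by
        gcongr; exact rpow_one_add_le_one_add_mul_self hs (by linarith) (by linarith)
    _ = A ^ p + p / 2 * A ^ (p - 2) * h := by
        rw [Real.rpow_sub hA, Real.rpow_two]; ring

lemma rpow_sub_one_mul_le_rpow {A B p : ℝ} (hA : 0 ≤ A) (hAB : A ≤ B) (hp : 1 ≤ p) :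
    A ^ (p - 1) * B ≤ B ^ p := by
  rcases (hA.trans hAB).eq_or_lt with rfl | hB
  · simpa using Real.rpow_nonneg le_rfl p
  · calc A ^ (p - 1) * B ≤ B ^ (p - 1) * B := by gcongr
      _ = B ^ p := by rw [← Real.rpow_add_one hB.ne', sub_add_cancel]

variable {H : Type*} [NormedAddCommGroup H] [InnerProductSpace ℝ H] {p : ℝ}

/-- The duality map `a ↦ ‖a‖ ^ (p - 2) • a`, which is the gradient of `‖·‖ ^ p / p`. It vanishes at
`a = 0`, whatever the value of `0 ^ (p - 2)`. -/
noncomputable def dualityMap (p : ℝ) (a : H) : H := ‖a‖ ^ (p - 2) • a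

lemma norm_dualityMap_le (p : ℝ) (a : H) : ‖dualityMap p a‖ ≤ ‖a‖ ^ (p - 1) := by
  rcases eq_or_ne a 0 with rfl | ha
  · simpa [dualityMap] using Real.rpow_nonneg le_rfl (p - 1)
  · rw [dualityMap, norm_smul, Real.norm_of_nonneg (by positivity),
      ← Real.rpow_add_one (norm_ne_zero_iff.2 ha)]
    ring_nf; rfl

lemma norm_dualityMap_mul_norm_le (hp : 1 ≤ p) (a b : H) :
    ‖dualityMap p a‖ * ‖b‖ ≤ ‖a‖ ^ p + ‖b‖ ^ p := by
  have ha := Real.rpow_nonneg (norm_nonneg a) p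
  have hb := Real.rpow_nonneg (norm_nonneg b) p
  have hmax : ‖a‖ ^ (p - 1) * max ‖a‖ ‖b‖ ≤ max ‖a‖ ‖b‖ ^ p :=
    rpow_sub_one_mul_le_rpow (norm_nonneg a) (le_max_left _ _) hp
  calc ‖dualityMap p a‖ * ‖b‖ ≤ ‖a‖ ^ (p - 1) * max ‖a‖ ‖b‖ :=
        mul_le_mul (norm_dualityMap_le p a) (le_max_right _ _) (norm_nonneg b) (by positivity)
    _ ≤ max ‖a‖ ‖b‖ ^ p := hmax
    _ ≤ ‖a‖ ^ p + ‖b‖ ^ p := by rcases max_choice ‖a‖ ‖b‖ with h | h <;> rw [h] <;> linarith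

lemma norm_add_rpow_eq (p : ℝ) (a b : H) :
    ‖a + b‖ ^ p = (‖a‖ ^ 2 + (2 * inner ℝ a b + ‖b‖ ^ 2)) ^ (p / 2) := by
  rw [← add_assoc, ← norm_add_sq_real, ← Real.rpow_natCast_mul (norm_nonneg _)]
  congr 1; push_cast; ring

lemma norm_add_rpow_le_tangent (hp0 : 0 ≤ p) (hp2 : p ≤ 2) {a : H} (ha : a ≠ 0) (b : H) :
    ‖a + b‖ ^ p ≤
      ‖a‖ ^ p + p / 2 * ‖a‖ ^ (p - 2) * (2 * inner ℝ a b + ‖b‖ ^ 2) := by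
  rw [norm_add_rpow_eq]
  refine sq_add_rpow_half_le (norm_pos_iff.2 ha) ?_ hp0 hp2
  rw [← add_assoc, ← norm_add_sq_real]; positivity

lemma norm_add_rpow_le_of_norm_le (hp0 : 0 < p) (hp2 : p ≤ 2) {a b : H} (hba : ‖b‖ ≤ ‖a‖) :
    ‖a + b‖ ^ p ≤ ‖a‖ ^ p + p * inner ℝ (dualityMap p a) b + p / 2 * ‖b‖ ^ p := by
  rcases eq_or_ne b 0 with rfl | hb
  · simp [Real.zero_rpow hp0.ne']
  have ha : a ≠ 0 := norm_pos_iff.1 ((norm_pos_iff.2 hb).trans_le hba)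
  have hquad : ‖a‖ ^ (p - 2) * ‖b‖ ^ 2 ≤ ‖b‖ ^ p := by
    calc ‖a‖ ^ (p - 2) * ‖b‖ ^ 2 ≤ ‖b‖ ^ (p - 2) * ‖b‖ ^ 2 := by
          gcongr ?_ * _
          exact Real.rpow_le_rpow_of_nonpos (norm_pos_iff.2 hb) hba (by linarith)
      _ = ‖b‖ ^ p := by
          rw [← Real.rpow_two, ← Real.rpow_add (norm_pos_iff.2 hb), sub_add_cancel]
  calc ‖a + b‖ ^ p ≤ ‖a‖ ^ p + p / 2 * ‖a‖ ^ (p - 2) * (2 * inner ℝ a b + ‖b‖ ^ 2) :=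
        norm_add_rpow_le_tangent hp0.le hp2 ha b
    _ = ‖a‖ ^ p + p * inner ℝ (dualityMap p a) b + p / 2 * (‖a‖ ^ (p - 2) * ‖b‖ ^ 2) := by
        rw [dualityMap, real_inner_smul_left]; ring
    _ ≤ ‖a‖ ^ p + p * inner ℝ (dualityMap p a) b + p / 2 * ‖b‖ ^ p := by gcongr

lemma norm_add_rpow_le_of_norm_ge (hp1 : 1 ≤ p) (hp2 : p ≤ 2) {a b : H} (hab : ‖a‖ ≤ ‖b‖) :
    ‖a + b‖ ^ p ≤ ‖a‖ ^ p + p * inner ℝ (dualityMap p a) b + (1 + p) * ‖b‖ ^ p := by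
  have hb_rpow : 0 ≤ ‖b‖ ^ p := by positivity
  rcases eq_or_ne a 0 with rfl | ha
  · simp only [zero_add, dualityMap, smul_zero, inner_zero_left, mul_zero, norm_zero, add_zero]
    nlinarith [Real.rpow_nonneg le_rfl p]
  have ha' : 0 < ‖a‖ := norm_pos_iff.2 ha
  have hb' : 0 < ‖b‖ := ha'.trans_le hab
  have hweights : ‖b‖ ^ (p - 2) ≤ ‖a‖ ^ (p - 2) :=
    Real.rpow_le_rpow_of_nonpos ha' hab (by linarith)
  have hcross : ‖a‖ ^ (p - 2) * (‖a‖ * ‖b‖) ≤ ‖b‖ ^ p := by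
    rw [← mul_assoc, ← Real.rpow_add_one ha'.ne', show p - 2 + 1 = p - 1 by ring]
    exact rpow_sub_one_mul_le_rpow ha'.le hab hp1
  have hinner : (‖a‖ ^ (p - 2) - ‖b‖ ^ (p - 2)) * -inner ℝ a b
      ≤ (‖a‖ ^ (p - 2) - ‖b‖ ^ (p - 2)) * (‖a‖ * ‖b‖) :=
    mul_le_mul_of_nonneg_left (neg_le_of_neg_le (abs_le.1 (abs_real_inner_le_norm a b)).1)
      (sub_nonneg.2 hweights)
  have hquad : ‖b‖ ^ (p - 2) * ‖a‖ ^ 2 ≤ ‖b‖ ^ (p - 2) * (‖a‖ * ‖b‖) := by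
    rw [pow_two]; gcongr
  have hlinear : ‖b‖ ^ (p - 2) * inner ℝ a b + ‖b‖ ^ (p - 2) * ‖a‖ ^ 2 / 2
      ≤ ‖a‖ ^ (p - 2) * inner ℝ a b + ‖b‖ ^ p := by
    have : 0 ≤ ‖b‖ ^ (p - 2) * (‖a‖ * ‖b‖) := by positivity
    linarith
  calc ‖a + b‖ ^ p ≤ ‖b‖ ^ p + p / 2 * ‖b‖ ^ (p - 2) * (2 * inner ℝ a b + ‖a‖ ^ 2) := by
        rw [add_comm a b, real_inner_comm]
        exact norm_add_rpow_le_tangent (by linarith) hp2 (norm_pos_iff.1 hb') a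
    _ = ‖b‖ ^ p + p * (‖b‖ ^ (p - 2) * inner ℝ a b + ‖b‖ ^ (p - 2) * ‖a‖ ^ 2 / 2) := by ring
    _ ≤ ‖b‖ ^ p + p * (‖a‖ ^ (p - 2) * inner ℝ a b + ‖b‖ ^ p) := by gcongr
    _ = p * inner ℝ (dualityMap p a) b + (1 + p) * ‖b‖ ^ p := by
        rw [dualityMap, real_inner_smul_left]; ring
    _ ≤ ‖a‖ ^ p + p * inner ℝ (dualityMap p a) b + (1 + p) * ‖b‖ ^ p := by
        linarith [Real.rpow_nonneg ha'.le p]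

lemma norm_add_rpow_le (hp1 : 1 ≤ p) (hp2 : p ≤ 2) (a b : H) :
    ‖a + b‖ ^ p ≤ ‖a‖ ^ p + p * inner ℝ (dualityMap p a) b + (1 + p) * ‖b‖ ^ p := by
  rcases le_total ‖a‖ ‖b‖ with hab | hba
  · exact norm_add_rpow_le_of_norm_ge hp1 hp2 hab
  · refine (norm_add_rpow_le_of_norm_le (by linarith) hp2 hba).trans ?_
    gcongr; linarith

end NormRpow

section MartingaleDifference

variable {Ω H : Type*} {mΩ : MeasurableSpace Ω} {μ : Measure Ω}
  [NormedAddCommGroup H] [InnerProductSpace ℝ H] {p : ℝ}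

lemma aestronglyMeasurable_dualityMap {m : MeasurableSpace Ω} {Y : Ω → H}
    (hY : AEStronglyMeasurable[m] Y μ) (p : ℝ) :
    AEStronglyMeasurable[m] (fun ω => dualityMap p (Y ω)) μ := by
  obtain ⟨Y', hY', hYY'⟩ := hY
  refine ⟨fun ω => dualityMap p (Y' ω), ?_, hYY'.mono fun ω hω => by simp only [hω]⟩
  exact (hY'.norm.measurable.pow_const (p - 2)).stronglyMeasurable.smul hY'

lemma aestronglyMeasurable_finsetSum {ι E : Type*} [NormedAddCommGroup E] {m : MeasurableSpace Ω}
    {X : ι → Ω → E} {s : Finset ι} (hX : ∀ i ∈ s, AEStronglyMeasurable[m] (X i) μ) :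
    AEStronglyMeasurable[m] (∑ i ∈ s, X i) μ :=
  Finset.sum_induction X (fun Y => AEStronglyMeasurable[m] Y μ) (fun _ _ hY hZ => hY.add hZ)
    stronglyMeasurable_zero.aestronglyMeasurable hX

lemma memLp_ofReal_iff_integrable_norm_rpow {E : Type*} [NormedAddCommGroup E] {X : Ω → E}
    (hX : AEStronglyMeasurable X μ) (hp : 0 < p) :
    MemLp X (ENNReal.ofReal p) μ ↔ Integrable (fun ω => ‖X ω‖ ^ p) μ := by
  rw [← integrable_norm_rpow_iff hX (by simpa using hp) (by simp), ENNReal.toReal_ofReal hp.le]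

lemma integral_norm_rpow_clm_apply_le {E F : Type*} [NormedAddCommGroup E] [NormedSpace ℝ E]
    [NormedAddCommGroup F] [NormedSpace ℝ F] (hp : 0 < p) {X : Ω → E}
    (hX : MemLp X (ENNReal.ofReal p) μ) {T : E →L[ℝ] F} {a : ℝ} (hT : ‖T‖ ≤ a) :
    ∫ ω, ‖T (X ω)‖ ^ p ∂μ ≤ a ^ p * ∫ ω, ‖X ω‖ ^ p ∂μ := by
  have ha : 0 ≤ a := (norm_nonneg T).trans hT
  have hTX : MemLp (fun ω => T (X ω)) (ENNReal.ofReal p) μ := T.comp_memLp' hX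
  rw [← integral_const_mul]
  refine integral_mono ((memLp_ofReal_iff_integrable_norm_rpow hTX.aestronglyMeasurable hp).1 hTX)
    (((memLp_ofReal_iff_integrable_norm_rpow hX.aestronglyMeasurable hp).1 hX).const_mul _)
    fun ω => ?_
  rw [← Real.mul_rpow ha (norm_nonneg _)]
  exact Real.rpow_le_rpow (norm_nonneg _) (T.le_of_opNorm_le hT _) hp.le

variable [CompleteSpace H]

lemma integral_inner_eq_zero_of_condExp_ae_eq_zero {m : MeasurableSpace Ω} (hm : m ≤ mΩ)
    [SigmaFinite (μ.trim hm)] {D X : Ω → H} (hD : AEStronglyMeasurable[m] D μ)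
    (hDX : Integrable (fun ω => inner ℝ (D ω) (X ω)) μ) (hX : Integrable X μ)
    (hX0 : μ[X | m] =ᵐ[μ] 0) : ∫ ω, inner ℝ (D ω) (X ω) ∂μ = 0 := by
  rw [← integral_condExp hm]
  refine integral_eq_zero_of_ae ?_
  filter_upwards [condExp_bilin_of_aestronglyMeasurable_left (innerSL ℝ) hD hDX hX, hX0]
    with ω hpull hω
  exact hpull.trans (by simp [hω])

lemma integral_norm_add_rpow_le_of_condExp_ae_eq_zero (hp1 : 1 ≤ p) (hp2 : p ≤ 2)
    {m : MeasurableSpace Ω} (hm : m ≤ mΩ) [SigmaFinite (μ.trim hm)] {Y X : Ω → H}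
    (hYm : AEStronglyMeasurable[m] Y μ) (hY : MemLp Y (ENNReal.ofReal p) μ)
    (hX : MemLp X (ENNReal.ofReal p) μ) (hXint : Integrable X μ) (hX0 : μ[X | m] =ᵐ[μ] 0) :
    ∫ ω, ‖Y ω + X ω‖ ^ p ∂μ ≤ ∫ ω, ‖Y ω‖ ^ p ∂μ + (1 + p) * ∫ ω, ‖X ω‖ ^ p ∂μ := by
  have hp0 : 0 < p := by linarith
  have integrable_rpow {Z : Ω → H} (hZ : MemLp Z (ENNReal.ofReal p) μ) :
      Integrable (fun ω => ‖Z ω‖ ^ p) μ :=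
    (memLp_ofReal_iff_integrable_norm_rpow hZ.aestronglyMeasurable hp0).1 hZ
  have hDm : AEStronglyMeasurable[m] (fun ω => dualityMap p (Y ω)) μ :=
    aestronglyMeasurable_dualityMap hYm p
  have hDX : Integrable (fun ω => inner ℝ (dualityMap p (Y ω)) (X ω)) μ :=
    ((integrable_rpow hY).add (integrable_rpow hX)).mono'
      ((hDm.mono hm).inner hX.aestronglyMeasurable)
      (ae_of_all _ fun ω => (norm_inner_le_norm _ _).trans (norm_dualityMap_mul_norm_le hp1 _ _))
  calc ∫ ω, ‖Y ω + X ω‖ ^ p ∂μ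
      ≤ ∫ ω, (‖Y ω‖ ^ p + p * inner ℝ (dualityMap p (Y ω)) (X ω) + (1 + p) * ‖X ω‖ ^ p) ∂μ :=
        integral_mono (integrable_rpow (hY.add hX))
          (((integrable_rpow hY).add (hDX.const_mul p)).add ((integrable_rpow hX).const_mul _))
          fun ω => norm_add_rpow_le hp1 hp2 _ _
    _ = ∫ ω, ‖Y ω‖ ^ p ∂μ + (1 + p) * ∫ ω, ‖X ω‖ ^ p ∂μ := by
        rw [integral_add (f := fun ω => ‖Y ω‖ ^ p + p * inner ℝ (dualityMap p (Y ω)) (X ω))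
            ((integrable_rpow hY).add (hDX.const_mul p)) ((integrable_rpow hX).const_mul _),
          integral_add (integrable_rpow hY) (hDX.const_mul p), integral_const_mul,
          integral_const_mul, integral_inner_eq_zero_of_condExp_ae_eq_zero hm hDm hDX hXint hX0,
          mul_zero, add_zero]

lemma integral_norm_le_integral_norm_rpow [IsProbabilityMeasure μ] {E : Type*}
    [NormedAddCommGroup E] {X : Ω → E} (hp : 1 ≤ p) (hX : MemLp X (ENNReal.ofReal p) μ) :
    ∫ ω, ‖X ω‖ ∂μ ≤ (∫ ω, ‖X ω‖ ^ p ∂μ) ^ (1 / p) := by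
  have hp0 : 0 < p := by linarith
  rw [one_div, Real.le_rpow_inv_iff_of_pos (by positivity) (by positivity) hp0]
  exact (convexOn_rpow hp).map_integral_le (Real.continuous_rpow_const hp0.le).continuousOn
    isClosed_Ici (ae_of_all _ fun ω => norm_nonneg (X ω))
    (hX.integrable (by simpa using hp)).norm
    ((memLp_ofReal_iff_integrable_norm_rpow hX.aestronglyMeasurable hp0).1 hX)

/-- A martingale difference sequence for the filtration `𝓕`, indexed as in stochastic gradient
methods: `X k` is centred given `𝓕 k` and becomes known at time `k + 1`. Measurability is only
required up to null sets, so that `X k` may be centred by any version of a conditional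
expectation. -/
structure IsMartingaleDifference {E : Type*} [NormedAddCommGroup E] [NormedSpace ℝ E]
    [CompleteSpace E] (𝓕 : Filtration ℕ mΩ) (μ : Measure Ω) (X : ℕ → Ω → E) : Prop where
  aestronglyMeasurable (k : ℕ) : AEStronglyMeasurable[𝓕 (k + 1)] (X k) μ
  integrable (k : ℕ) : Integrable (X k) μ
  condExp_ae_eq_zero (k : ℕ) : μ[X k | 𝓕 k] =ᵐ[μ] 0

namespace IsMartingaleDifference

variable {𝓕 : Filtration ℕ mΩ} {E F : Type*} [NormedAddCommGroup E] [NormedSpace ℝ E]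
  [CompleteSpace E] [NormedAddCommGroup F] [NormedSpace ℝ F] [CompleteSpace F]

lemma sub_of_condExp_ae_eq [SigmaFiniteFiltration μ 𝓕] {g G : ℕ → Ω → E}
    (hgm : ∀ k, AEStronglyMeasurable[𝓕 (k + 1)] (g k) μ) (hg : ∀ k, Integrable (g k) μ)
    (hG : ∀ k, μ[g k | 𝓕 k] =ᵐ[μ] G k) :
    IsMartingaleDifference 𝓕 μ fun k ω => g k ω - G k ω where
  aestronglyMeasurable k := (hgm k).sub
    ((stronglyMeasurable_condExp.aestronglyMeasurable.congr (hG k)).mono (𝓕.mono k.le_succ))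
  integrable k := (hg k).sub (integrable_condExp.congr (hG k))
  condExp_ae_eq_zero k := by
    have hGm : AEStronglyMeasurable[𝓕 k] (G k) μ :=
      stronglyMeasurable_condExp.aestronglyMeasurable.congr (hG k)
    have hGint : Integrable (G k) μ := integrable_condExp.congr (hG k)
    filter_upwards [condExp_sub (hg k) hGint (𝓕 k), hG k,
      condExp_of_aestronglyMeasurable' (𝓕.le k) hGm hGint] with ω hsub hω hGω
    exact hsub.trans (by simp [hω, hGω])

lemma clm_apply {X : ℕ → Ω → E} (hX : IsMartingaleDifference 𝓕 μ X) (T : ℕ → E →L[ℝ] F) :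
    IsMartingaleDifference 𝓕 μ fun k ω => T k (X k ω) where
  aestronglyMeasurable k := (T k).continuous.comp_aestronglyMeasurable (hX.aestronglyMeasurable k)
  integrable k := (T k).integrable_comp (hX.integrable k)
  condExp_ae_eq_zero k := by
    filter_upwards [(T k).comp_condExp_comm (m := 𝓕 k) (hX.integrable k), hX.condExp_ae_eq_zero k]
      with ω hcomm hω
    exact hcomm.symm.trans (by simp [hω])

lemma finsetSum {ι : Type*} (s : Finset ι) {X : ι → ℕ → Ω → E}
    (hX : ∀ i, IsMartingaleDifference 𝓕 μ (X i)) :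
    IsMartingaleDifference 𝓕 μ fun k => ∑ i ∈ s, X i k where
  aestronglyMeasurable k :=
    aestronglyMeasurable_finsetSum fun i _ => (hX i).aestronglyMeasurable k
  integrable k := integrable_finsetSum' s fun i _ => (hX i).integrable k
  condExp_ae_eq_zero k := by
    have hzero : ∀ᵐ ω ∂μ, ∀ i ∈ s, μ[X i k | 𝓕 k] ω = 0 :=
      (Finset.eventually_all s).2 fun i _ => (hX i).condExp_ae_eq_zero k
    filter_upwards [condExp_finsetSum (s := s) (fun i _ => (hX i).integrable k) (𝓕 k), hzero]
      with ω hsum hω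
    rw [hsum, Finset.sum_apply, Finset.sum_eq_zero hω, Pi.zero_apply]

lemma toLp {ι : Type*} [Fintype ι] {X : ℕ → ι → Ω → E}
    (hX : ∀ i, IsMartingaleDifference 𝓕 μ fun k => X k i) :
    IsMartingaleDifference 𝓕 μ
      fun k ω => (WithLp.toLp 2 fun i => X k i ω : PiLp 2 fun _ : ι => E) := by
  classical
  let single (i : ι) : E →L[ℝ] PiLp 2 fun _ : ι => E :=
    (PiLp.continuousLinearEquiv 2 ℝ fun _ : ι => E).symm.toContinuousLinearMap ∘L
      ContinuousLinearMap.single ℝ (fun _ : ι => E) i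
  have hsum : (fun k ω => (WithLp.toLp 2 fun i => X k i ω : PiLp 2 fun _ : ι => E))
      = fun k => ∑ i, fun ω => single i (X k i ω) := by
    funext k ω
    ext i
    simp [single, Finset.sum_apply, Pi.single_apply]
  rw [hsum]
  exact finsetSum _ fun i => (hX i).clm_apply fun _ => single i

lemma aestronglyMeasurable_sum_range {X : ℕ → Ω → E} (hX : IsMartingaleDifference 𝓕 μ X) (m : ℕ) :
    AEStronglyMeasurable[𝓕 m] (∑ k ∈ Finset.range m, X k) μ :=
  aestronglyMeasurable_finsetSum fun k hk =>
    (hX.aestronglyMeasurable k).mono (𝓕.mono (Nat.succ_le_of_lt (Finset.mem_range.1 hk)))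

/-- The von Bahr–Esseen inequality. -/
lemma integral_norm_sum_rpow_le [SigmaFiniteFiltration μ 𝓕] {X : ℕ → Ω → H}
    (hX : IsMartingaleDifference 𝓕 μ X) (hp1 : 1 ≤ p) (hp2 : p ≤ 2)
    (hXp : ∀ k, MemLp (X k) (ENNReal.ofReal p) μ) (m : ℕ) :
    ∫ ω, ‖∑ k ∈ Finset.range m, X k ω‖ ^ p ∂μ
      ≤ (1 + p) * ∑ k ∈ Finset.range m, ∫ ω, ‖X k ω‖ ^ p ∂μ := by
  induction m with
  | zero => simp [Real.zero_rpow (by linarith : p ≠ 0)]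
  | succ m ih =>
    have hSp : MemLp (∑ k ∈ Finset.range m, X k) (ENNReal.ofReal p) μ :=
      memLp_finsetSum' _ fun k _ => hXp k
    have hstep := integral_norm_add_rpow_le_of_condExp_ae_eq_zero hp1 hp2 (𝓕.le m)
      (hX.aestronglyMeasurable_sum_range m) hSp (hXp m) (hX.integrable m)
      (hX.condExp_ae_eq_zero m)
    simp only [Finset.sum_apply] at hstep
    simp only [Finset.sum_range_succ, mul_add]
    linarith

lemma integral_norm_sum_clm_apply_le [IsProbabilityMeasure μ] {X : ℕ → Ω → E}
    (hX : IsMartingaleDifference 𝓕 μ X) (hp1 : 1 ≤ p) (hp2 : p ≤ 2)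
    (hXp : ∀ k, MemLp (X k) (ENNReal.ofReal p) μ) {C : ℝ} (hC : ∀ k, ∫ ω, ‖X k ω‖ ^ p ∂μ ≤ C)
    {T : ℕ → E →L[ℝ] H} {a : ℕ → ℝ} (hT : ∀ k, ‖T k‖ ≤ a k) (m : ℕ) :
    ∫ ω, ‖∑ k ∈ Finset.range m, T k (X k ω)‖ ∂μ
      ≤ ((1 + p) * ((∑ k ∈ Finset.range m, a k ^ p) * C)) ^ (1 / p) := by
  have hTXp (k : ℕ) : MemLp (fun ω => T k (X k ω)) (ENNReal.ofReal p) μ :=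
    (T k).comp_memLp' (hXp k)
  have hmoment (k : ℕ) : ∫ ω, ‖T k (X k ω)‖ ^ p ∂μ ≤ a k ^ p * C :=
    (integral_norm_rpow_clm_apply_le (by linarith) (hXp k) (hT k)).trans
      (mul_le_mul_of_nonneg_left (hC k) (Real.rpow_nonneg ((norm_nonneg _).trans (hT k)) p))
  calc ∫ ω, ‖∑ k ∈ Finset.range m, T k (X k ω)‖ ∂μ
      ≤ (∫ ω, ‖∑ k ∈ Finset.range m, T k (X k ω)‖ ^ p ∂μ) ^ (1 / p) :=
        integral_norm_le_integral_norm_rpow hp1 (memLp_finsetSum _ fun k _ => hTXp k)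
    _ ≤ ((1 + p) * ∑ k ∈ Finset.range m, ∫ ω, ‖T k (X k ω)‖ ^ p ∂μ) ^ (1 / p) := by
        gcongr
        exact (hX.clm_apply T).integral_norm_sum_rpow_le hp1 hp2 hTXp m
    _ ≤ ((1 + p) * ((∑ k ∈ Finset.range m, a k ^ p) * C)) ^ (1 / p) := by
        rw [Finset.sum_mul]
        gcongr with k
        exact hmoment k

end IsMartingaleDifference

end MartingaleDifference

section Mixing

open scoped MatrixOrder

variable {ι E : Type*} [Fintype ι] [NormedAddCommGroup E]

lemma sum_norm_le_sqrt_card_mul_norm (z : PiLp 2 fun _ : ι => E) :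
    ∑ i, ‖z i‖ ≤ √(Fintype.card ι) * ‖z‖ := by
  refine le_of_sq_le_sq ?_ (by positivity)
  rw [mul_pow, Real.sq_sqrt (by positivity), PiLp.norm_sq_eq_of_L2]
  exact sq_sum_le_card_mul_sum_sq

lemma norm_rpow_le_sum_norm_rpow {p : ℝ} (hp0 : 0 < p) (hp2 : p ≤ 2)
    (z : PiLp 2 fun _ : ι => E) : ‖z‖ ^ p ≤ ∑ i, ‖z i‖ ^ p := by
  have sq_rpow_half {a : ℝ} (ha : 0 ≤ a) : (a ^ 2) ^ (p / 2) = a ^ p := by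
    rw [← Real.rpow_natCast_mul ha]; congr 1; push_cast; ring
  calc ‖z‖ ^ p = (∑ i, ‖z i‖ ^ 2) ^ (p / 2) := by
        rw [← PiLp.norm_sq_eq_of_L2, sq_rpow_half (norm_nonneg z)]
    _ ≤ ∑ i, (‖z i‖ ^ 2) ^ (p / 2) :=
        Finset.le_sum_of_subadditive_on_pred (· ^ (p / 2)) (0 ≤ ·)
          (Real.zero_rpow (by positivity)).le
          (fun _ _ ha hb => Real.rpow_add_le_add_rpow ha hb (by linarith) (by linarith))
          (fun _ _ => add_nonneg) (fun i => ‖z i‖ ^ 2) fun _ _ => by positivity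
    _ = ∑ i, ‖z i‖ ^ p := by simp only [sq_rpow_half (norm_nonneg _)]

/-- The matrix `(1/n) 1 1ᵀ`, with `n` the number of nodes, which replaces every block by the
mean. -/
noncomputable def averaging (ι : Type*) [Fintype ι] : Matrix ι ι ℝ :=
  (Fintype.card ι : ℝ)⁻¹ • Matrix.of fun _ _ => 1

lemma averaging_apply (i j : ι) : averaging ι i j = (Fintype.card ι : ℝ)⁻¹ := by
  simp [averaging]

lemma averaging_mul {W : Matrix ι ι ℝ} (hW : ∀ r, ∑ i, W i r = 1) :
    averaging ι * W = averaging ι := by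
  ext i r
  simp [Matrix.mul_apply, averaging_apply, ← Finset.mul_sum, hW]

lemma mul_averaging {W : Matrix ι ι ℝ} (hW : ∀ i, ∑ r, W i r = 1) :
    W * averaging ι = averaging ι := by
  ext i r
  simp [Matrix.mul_apply, averaging_apply, ← Finset.sum_mul, hW]

lemma averaging_mul_self [Nonempty ι] : averaging ι * averaging ι = averaging ι :=
  averaging_mul fun r => by simp [averaging_apply]

variable [NormedSpace ℝ E]

/-- The operator `Q ⊗ I` on stacked vectors: `Q` mixes the blocks, each of which lies in `E`. -/
noncomputable def mixCLM (Q : Matrix ι ι ℝ) :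
    (PiLp 2 fun _ : ι => E) →L[ℝ] PiLp 2 fun _ : ι => E :=
  (PiLp.continuousLinearEquiv 2 ℝ fun _ : ι => E).symm.toContinuousLinearMap ∘L
    ContinuousLinearMap.pi fun i => ∑ r, Q i r • PiLp.proj 2 (fun _ : ι => E) r

@[simp]
lemma mixCLM_apply (Q : Matrix ι ι ℝ) (z : PiLp 2 fun _ : ι => E) (i : ι) :
    mixCLM Q z i = ∑ r, Q i r • z r := by
  simp [mixCLM]

lemma mixCLM_mul_apply (A B : Matrix ι ι ℝ) (z : PiLp 2 fun _ : ι => E) :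
    mixCLM (A * B) z = mixCLM A (mixCLM B z) := by
  ext i
  simp only [mixCLM_apply, Matrix.mul_apply, Finset.sum_smul, Finset.smul_sum, mul_smul]
  exact Finset.sum_comm

variable {H : Type*} [NormedAddCommGroup H] [InnerProductSpace ℝ H]

lemma norm_sq_mixCLM_apply (Q : Matrix ι ι ℝ) (z : PiLp 2 fun _ : ι => H) :
    ‖mixCLM Q z‖ ^ 2 = ∑ r, ∑ s, (Q.transpose * Q) r s * inner ℝ (z r) (z s) := by
  simp only [PiLp.norm_sq_eq_of_L2]
  simp only [← real_inner_self_eq_norm_sq, mixCLM_apply, sum_inner, inner_sum,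
    real_inner_smul_left, real_inner_smul_right, Matrix.mul_apply, Matrix.transpose_apply,
    Finset.sum_mul]
  rw [Finset.sum_comm]
  refine Finset.sum_congr rfl fun r _ => ?_
  rw [Finset.sum_comm]
  exact Finset.sum_congr rfl fun s _ => Finset.sum_congr rfl fun i _ => by
    rw [real_inner_comm]; ring

variable [DecidableEq ι]

lemma posSemidef_sq_norm_smul_one_sub (Q : Matrix ι ι ℝ) :
    (‖Matrix.toEuclideanCLM (𝕜 := ℝ) (n := ι) Q‖ ^ 2 • (1 : Matrix ι ι ℝ)
      - Q.transpose * Q).PosSemidef := by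
  refine Matrix.PosSemidef.of_dotProduct_mulVec_nonneg ?_ fun u => ?_
  · ext i j
    simp [Matrix.mul_apply, Matrix.one_apply, mul_comm, eq_comm]
  · have hQ : ‖(WithLp.toLp 2 (Q.mulVec u) : EuclideanSpace ℝ ι)‖
        ≤ ‖Matrix.toEuclideanCLM (𝕜 := ℝ) (n := ι) Q‖ * ‖(WithLp.toLp 2 u : EuclideanSpace ℝ ι)‖ :=
      (Matrix.toEuclideanCLM (𝕜 := ℝ) (n := ι) Q).le_opNorm (WithLp.toLp 2 u)
    have hsq := pow_le_pow_left₀ (norm_nonneg _) hQ 2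
    rw [mul_pow, EuclideanSpace.real_norm_sq_eq, EuclideanSpace.real_norm_sq_eq] at hsq
    have hform : star u ⬝ᵥ ((‖Matrix.toEuclideanCLM (𝕜 := ℝ) (n := ι) Q‖ ^ 2 •
        (1 : Matrix ι ι ℝ) - Q.transpose * Q).mulVec u)
        = ‖Matrix.toEuclideanCLM (𝕜 := ℝ) (n := ι) Q‖ ^ 2 * (u ⬝ᵥ u)
          - Q.mulVec u ⬝ᵥ Q.mulVec u := by
      rw [star_trivial, Matrix.sub_mulVec, Matrix.smul_mulVec, Matrix.one_mulVec,
        dotProduct_sub, dotProduct_smul, smul_eq_mul, ← Matrix.mulVec_mulVec,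
        Matrix.dotProduct_mulVec u, Matrix.vecMul_transpose]
    rw [hform, sub_nonneg]
    simpa [dotProduct, ← pow_two] using hsq

lemma norm_mixCLM_le (Q : Matrix ι ι ℝ) :
    ‖(mixCLM Q : (PiLp 2 fun _ : ι => H) →L[ℝ] _)‖
      ≤ ‖Matrix.toEuclideanCLM (𝕜 := ℝ) (n := ι) Q‖ := by
  set l := ‖Matrix.toEuclideanCLM (𝕜 := ℝ) (n := ι) Q‖
  refine ContinuousLinearMap.opNorm_le_bound _ (norm_nonneg _) fun z => ?_
  -- With `BᵀB = ‖Q‖² • 1 - QᵀQ` one has `‖Q z‖² + ‖B z‖² = ‖Q‖² ‖z‖²`, block by block.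
  obtain ⟨B, hB⟩ := CStarAlgebra.nonneg_iff_eq_star_mul_self.1
    (posSemidef_sq_norm_smul_one_sub Q).nonneg
  have hsum : ‖mixCLM Q z‖ ^ 2 + ‖mixCLM B z‖ ^ 2 = l ^ 2 * ‖z‖ ^ 2 := by
    have hBB : B.transpose * B = l ^ 2 • 1 - Q.transpose * Q := hB.symm
    rw [norm_sq_mixCLM_apply, norm_sq_mixCLM_apply, hBB]
    simp only [← Finset.sum_add_distrib, ← add_mul, ← Matrix.add_apply, add_sub_cancel]
    simp [Matrix.one_apply, PiLp.norm_sq_eq_of_L2, Finset.mul_sum]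
  refine le_of_sq_le_sq ?_ (by positivity)
  rw [mul_pow]
  linarith [sq_nonneg ‖mixCLM B z‖]

lemma one_sub_averaging_mul {W : Matrix ι ι ℝ} (hW : ∀ r, ∑ i, W i r = 1) :
    (1 - averaging ι) * W = W - averaging ι := by
  rw [sub_mul, one_mul, averaging_mul hW]

lemma sub_averaging_mul_one_sub_averaging [Nonempty ι] {W : Matrix ι ι ℝ}
    (hW : ∀ i, ∑ r, W i r = 1) :
    (W - averaging ι) * (1 - averaging ι) = W - averaging ι := by
  rw [mul_sub, mul_one, sub_mul, mul_averaging hW, averaging_mul_self, sub_self, sub_zero]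

lemma mixCLM_one_sub_averaging_apply (z : PiLp 2 fun _ : ι => E) (i : ι) :
    mixCLM (1 - averaging ι) z i = z i - (Fintype.card ι : ℝ)⁻¹ • ∑ j, z j := by
  simp [sub_smul, Finset.sum_sub_distrib, averaging_apply, Finset.smul_sum, Matrix.one_apply]

/-- The contraction factor of the disagreement under mixing by `W`: the spectral norm of
`W - (1/n) 1 1ᵀ`. -/
noncomputable def mixingRate (W : Matrix ι ι ℝ) : ℝ :=
  ‖Matrix.toEuclideanCLM (𝕜 := ℝ) (n := ι) (W - averaging ι)‖

lemma mixingRate_nonneg (W : Matrix ι ι ℝ) : 0 ≤ mixingRate W := norm_nonneg _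

lemma norm_mixCLM_sub_averaging_pow_le (W : Matrix ι ι ℝ) {m : ℕ} (hm : 0 < m) :
    ‖(mixCLM (W - averaging ι) : (PiLp 2 fun _ : ι => H) →L[ℝ] _) ^ m‖ ≤ mixingRate W ^ m :=
  (norm_pow_le' (mixCLM (E := H) (W - averaging ι)) hm).trans (by
    gcongr; exact norm_mixCLM_le _)

end Mixing

section Dynamics

lemma eq_sum_pow_apply_of_recurrence {R M : Type*} [Semiring R] [AddCommMonoid M] [Module R M]
    [TopologicalSpace M] {T : M →L[R] M} {e u : ℕ → M} (h_zero : e 0 = T (u 0))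
    (h_succ : ∀ t, e (t + 1) = T (e t + u (t + 1))) (t : ℕ) :
    e t = ∑ k ∈ Finset.range (t + 1), (T ^ (t - k + 1)) (u k) := by
  induction t with
  | zero => simp [h_zero]
  | succ t ih =>
    rw [h_succ, ih, map_add, map_sum, Finset.sum_range_succ _ (t + 1), Nat.sub_self, zero_add,
      pow_one]
    congr 1
    refine Finset.sum_congr rfl fun k hk => ?_
    rw [Nat.sub_add_comm (Nat.lt_succ_iff.1 (Finset.mem_range.1 hk)), pow_succ' T (t - k + 1)]
    rfl

variable {ι E : Type*} [Fintype ι] [NormedAddCommGroup E] [NormedSpace ℝ E]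

/-- The sequences `v` and `y` are the momenta and the gradient trackers that the nodes `ι`
compute from the stochastic gradients `g`, with mixing matrix `W` and momentum parameter `β`. The
initial values `v⁻¹ = y⁻¹ = 0` are substituted into the first step. -/
structure IsMomentumTracker (W : Matrix ι ι ℝ) (β : ℝ) (g v y : ℕ → ι → E) : Prop where
  momentum_zero (i : ι) : v 0 i = (1 - β) • g 0 i
  momentum_succ (t : ℕ) (i : ι) : v (t + 1) i = β • v t i + (1 - β) • g (t + 1) i
  tracker_zero (i : ι) : y 0 i = ∑ r, W i r • v 0 r
  tracker_succ (t : ℕ) (i : ι) : y (t + 1) i = ∑ r, W i r • (y t r + v (t + 1) r - v t r)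

namespace IsMomentumTracker

variable {W : Matrix ι ι ℝ} {β : ℝ} {g v y : ℕ → ι → E}

lemma momentum_zero_eq_smul (h : IsMomentumTracker W β g v y) (hβ : β ≠ 0) (i : ι) :
    v 0 i = (1 / β - 1) • (g 0 i - v 0 i) := by
  rw [h.momentum_zero]
  match_scalars
  field_simp
  ring

lemma momentum_succ_sub_eq_smul (h : IsMomentumTracker W β g v y) (hβ : β ≠ 0) (t : ℕ) (i : ι) :
    v (t + 1) i - v t i = (1 / β - 1) • (g (t + 1) i - v (t + 1) i) := by
  rw [h.momentum_succ]
  match_scalars <;> field_simp <;> ring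

variable [DecidableEq ι]

lemma mixCLM_one_sub_averaging_tracker_eq_sum [Nonempty ι] (h : IsMomentumTracker W β g v y)
    (hβ : β ≠ 0) (hrow : ∀ i, ∑ r, W i r = 1) (hcol : ∀ r, ∑ i, W i r = 1) (t : ℕ) :
    mixCLM (1 - averaging ι) (WithLp.toLp 2 (y t))
      = (1 / β - 1) • ∑ k ∈ Finset.range (t + 1),
        (mixCLM (W - averaging ι) ^ (t - k + 1)) (WithLp.toLp 2 (g k - v k)) := by
  have hmix (z : PiLp 2 fun _ : ι => E) :
      mixCLM (1 - averaging ι) (mixCLM W z) = mixCLM (W - averaging ι) z := by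
    rw [← mixCLM_mul_apply, one_sub_averaging_mul hcol]
  have hcentre (z : PiLp 2 fun _ : ι => E) :
      mixCLM (W - averaging ι) (mixCLM (1 - averaging ι) z) = mixCLM (W - averaging ι) z := by
    rw [← mixCLM_mul_apply, sub_averaging_mul_one_sub_averaging hrow]
  have hy_zero : WithLp.toLp 2 (y 0)
      = mixCLM W (WithLp.toLp 2 ((1 / β - 1) • (g 0 - v 0))) := by
    ext i
    simp only [h.tracker_zero, mixCLM_apply, Pi.smul_apply, Pi.sub_apply,
      ← h.momentum_zero_eq_smul hβ]
  have hy_succ (k : ℕ) : WithLp.toLp 2 (y (k + 1)) = mixCLM W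
      (WithLp.toLp 2 (y k) + WithLp.toLp 2 ((1 / β - 1) • (g (k + 1) - v (k + 1)))) := by
    ext i
    simp only [h.tracker_succ, mixCLM_apply, PiLp.add_apply, Pi.smul_apply, Pi.sub_apply,
      ← h.momentum_succ_sub_eq_smul hβ, add_sub_assoc]
  rw [eq_sum_pow_apply_of_recurrence (T := mixCLM (W - averaging ι))
    (u := fun k => WithLp.toLp 2 ((1 / β - 1) • (g k - v k)))
    (e := fun k => mixCLM (1 - averaging ι) (WithLp.toLp 2 (y k)))
    (by rw [hy_zero, hmix]) (fun k => by rw [hy_succ, hmix, map_add, map_add, hcentre])]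
  simp only [WithLp.toLp_smul, map_smul, Finset.smul_sum]

lemma sum_norm_sub_average_le [Nonempty ι] {H : Type*} [NormedAddCommGroup H]
    [InnerProductSpace ℝ H] {g v y : ℕ → ι → H} (h : IsMomentumTracker W β g v y)
    (hβ : β ∈ Set.Ioc (0 : ℝ) 1) (hrow : ∀ i, ∑ r, W i r = 1) (hcol : ∀ r, ∑ i, W i r = 1)
    (G : ℕ → ι → H) (t : ℕ) :
    ∑ i, ‖y t i - (Fintype.card ι : ℝ)⁻¹ • ∑ j, y t j‖
      ≤ √(Fintype.card ι) * ((1 / β - 1) *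
        (‖∑ k ∈ Finset.range (t + 1),
            (mixCLM (W - averaging ι) ^ (t - k + 1)) (WithLp.toLp 2 fun i => g k i - G k i)‖
          + ∑ k ∈ Finset.range (t + 1),
            mixingRate W ^ (t - k + 1) * ‖WithLp.toLp 2 fun i => G k i - v k i‖)) := by
  have hc : 0 ≤ 1 / β - 1 := sub_nonneg.2 (one_le_one_div hβ.1 hβ.2)
  have hdeviation (i : ι) : mixCLM (1 - averaging ι) (WithLp.toLp 2 (y t)) i
      = y t i - (Fintype.card ι : ℝ)⁻¹ • ∑ j, y t j := mixCLM_one_sub_averaging_apply _ i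
  have hsplit (k : ℕ) : WithLp.toLp 2 (g k - v k)
      = WithLp.toLp 2 (fun i => g k i - G k i) + WithLp.toLp 2 fun i => G k i - v k i :=
    congrArg (WithLp.toLp 2) (sub_add_sub_cancel (g k) (G k) (v k)).symm
  calc ∑ i, ‖y t i - (Fintype.card ι : ℝ)⁻¹ • ∑ j, y t j‖
      ≤ √(Fintype.card ι) * ‖mixCLM (1 - averaging ι) (WithLp.toLp 2 (y t))‖ := by
        simp only [← hdeviation]
        exact sum_norm_le_sqrt_card_mul_norm _
    _ ≤ _ := by
        rw [h.mixCLM_one_sub_averaging_tracker_eq_sum hβ.1.ne' hrow hcol, norm_smul,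
          Real.norm_of_nonneg hc]
        simp only [hsplit, map_add, Finset.sum_add_distrib]
        gcongr
        refine (norm_add_le _ _).trans (add_le_add_right (norm_sum_le_of_le _ fun k _ => ?_) _)
        exact ContinuousLinearMap.le_of_opNorm_le _
          (norm_mixCLM_sub_averaging_pow_le W (t - k).succ_pos) _

end IsMomentumTracker

end Dynamics

section ConsensusError

variable {Ω ι E : Type*} {mΩ : MeasurableSpace Ω} {μ : Measure Ω} [Fintype ι]
  [NormedAddCommGroup E] {p σ : ℝ}

lemma integral_norm_toLp_rpow_le (hp0 : 0 < p) (hp2 : p ≤ 2) {X : ι → Ω → E}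
    (hX : ∀ i, MemLp (X i) (ENNReal.ofReal p) μ) {C : ℝ} (hC : ∀ i, ∫ ω, ‖X i ω‖ ^ p ∂μ ≤ C) :
    ∫ ω, ‖(WithLp.toLp 2 fun i => X i ω : PiLp 2 fun _ : ι => E)‖ ^ p ∂μ
      ≤ Fintype.card ι * C := by
  have hXp (i : ι) : Integrable (fun ω => ‖X i ω‖ ^ p) μ :=
    (memLp_ofReal_iff_integrable_norm_rpow (hX i).aestronglyMeasurable hp0).1 (hX i)
  calc ∫ ω, ‖(WithLp.toLp 2 fun i => X i ω : PiLp 2 fun _ : ι => E)‖ ^ p ∂μ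
      ≤ ∫ ω, ∑ i, ‖X i ω‖ ^ p ∂μ :=
        integral_mono_of_nonneg (ae_of_all _ fun ω => by positivity)
          (integrable_finsetSum _ fun i _ => hXp i)
          (ae_of_all _ fun ω => norm_rpow_le_sum_norm_rpow hp0 hp2 _)
    _ = ∑ i, ∫ ω, ‖X i ω‖ ^ p ∂μ := integral_finsetSum _ fun i _ => hXp i
    _ ≤ Fintype.card ι * C := by
        simpa using Finset.sum_le_card_nsmul Finset.univ _ C fun i _ => hC i

lemma integral_le_of_condExp_ae_le [IsProbabilityMeasure μ] {m : MeasurableSpace Ω} (hm : m ≤ mΩ)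
    {X : Ω → ℝ} {C : ℝ} (hX : ∀ᵐ ω ∂μ, μ[X | m] ω ≤ C) : ∫ ω, X ω ∂μ ≤ C := by
  rw [← integral_condExp hm]
  simpa using integral_mono_ae integrable_condExp (integrable_const C) hX

lemma one_add_mul_rpow_inv_le {L n : ℝ} (hp : 1 ≤ p) (hn : 1 ≤ n) (hL : 0 ≤ L) (hσ : 0 ≤ σ) :
    ((1 + p) * (L * (n * σ ^ p))) ^ (1 / p) ≤ 2 * √2 * n * L ^ (1 / p) * σ := by
  have hp0 : 0 < p := by linarith
  have h_one_add : 1 + p ≤ (2 * √2) ^ p := by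
    calc 1 + p ≤ 2 ^ p := by
          simpa [one_add_one_eq_two] using
            one_add_mul_self_le_rpow_one_add (s := 1) (by norm_num) hp
      _ ≤ (2 * √2) ^ p := by
          gcongr
          exact le_mul_of_one_le_right zero_le_two (Real.one_le_sqrt.2 one_le_two)
  have h_self_le : n ≤ n ^ p := Real.self_le_rpow_of_one_le hn hp
  have h_eq : (2 * √2) ^ p * n ^ p * L * σ ^ p = (2 * √2 * n * L ^ (1 / p) * σ) ^ p := by
    rw [Real.mul_rpow (by positivity) hσ,
      Real.mul_rpow (y := L ^ (1 / p)) (by positivity) (by positivity),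
      Real.mul_rpow (y := n) (by positivity) (by positivity), ← Real.rpow_mul hL,
      one_div_mul_cancel hp0.ne', Real.rpow_one]
  rw [one_div, Real.rpow_inv_le_iff_of_pos (by positivity) (by positivity) hp0, ← one_div, ← h_eq]
  calc (1 + p) * (L * (n * σ ^ p)) = (1 + p) * n * L * σ ^ p := by ring
    _ ≤ (2 * √2) ^ p * n ^ p * L * σ ^ p := by gcongr

lemma IsMomentumTracker.integrable_momentum [NormedSpace ℝ E] {W : Matrix ι ι ℝ} {β : ℝ}
    {g v y : ℕ → ι → Ω → E}
    (h : ∀ ω, IsMomentumTracker W β (fun t i => g t i ω) (fun t i => v t i ω) fun t i => y t i ω)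
    (hg : ∀ t i, Integrable (g t i) μ) (t : ℕ) (i : ι) : Integrable (v t i) μ := by
  induction t with
  | zero =>
    rw [show v 0 i = (1 - β) • g 0 i from funext fun ω => (h ω).momentum_zero i]
    exact (hg 0 i).smul _
  | succ t ih =>
    rw [show v (t + 1) i = β • v t i + (1 - β) • g (t + 1) i from
      funext fun ω => (h ω).momentum_succ t i]
    exact (ih.smul _).add ((hg (t + 1) i).smul _)

variable [InnerProductSpace ℝ E]

lemma integral_sum_norm_sub_average_le [DecidableEq ι] [Nonempty ι] {W : Matrix ι ι ℝ}
    (hrow : ∀ i, ∑ r, W i r = 1) (hcol : ∀ r, ∑ i, W i r = 1) {β : ℝ}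
    (hβ : β ∈ Set.Ioc (0 : ℝ) 1) {g v y G : ℕ → ι → Ω → E}
    (h : ∀ ω, IsMomentumTracker W β (fun t i => g t i ω) (fun t i => v t i ω) fun t i => y t i ω)
    (hg : ∀ t i, Integrable (g t i) μ) (hG : ∀ t i, Integrable (G t i) μ) (t : ℕ) :
    ∫ ω, ∑ i, ‖y t i ω - (Fintype.card ι : ℝ)⁻¹ • ∑ j, y t j ω‖ ∂μ
      ≤ √(Fintype.card ι) * ((1 / β - 1) *
        (∫ ω, ‖∑ k ∈ Finset.range (t + 1), (mixCLM (W - averaging ι) ^ (t - k + 1))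
            (WithLp.toLp 2 fun i => g k i ω - G k i ω)‖ ∂μ
          + ∑ k ∈ Finset.range (t + 1), mixingRate W ^ (t - k + 1) *
            ∫ ω, ‖WithLp.toLp 2 fun i => G k i ω - v k i ω‖ ∂μ)) := by
  have hnoise_int (k : ℕ) :
      Integrable (fun ω => (WithLp.toLp 2 fun i => g k i ω - G k i ω : PiLp 2 fun _ : ι => E)) μ :=
    .of_eval_piLp fun i => (hg k i).sub (hG k i)
  have hdrift_int (k : ℕ) :
      Integrable (fun ω => (WithLp.toLp 2 fun i => G k i ω - v k i ω : PiLp 2 fun _ : ι => E)) μ :=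
    .of_eval_piLp fun i => (hG k i).sub (IsMomentumTracker.integrable_momentum h hg k i)
  have hnoise_sum_int : Integrable (fun ω => ‖∑ k ∈ Finset.range (t + 1),
      (mixCLM (W - averaging ι) ^ (t - k + 1)) (WithLp.toLp 2 fun i => g k i ω - G k i ω)‖) μ :=
    (integrable_finsetSum _ fun k _ => ContinuousLinearMap.integrable_comp _ (hnoise_int k)).norm
  have hdrift_sum_int := integrable_finsetSum (Finset.range (t + 1)) fun k _ =>
    (hdrift_int k).norm.const_mul (mixingRate W ^ (t - k + 1))
  simp only [← integral_const_mul]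
  rw [← integral_finsetSum _ fun k _ => (hdrift_int k).norm.const_mul _,
    ← integral_add hnoise_sum_int hdrift_sum_int, ← integral_const_mul, ← integral_const_mul]
  exact integral_mono_of_nonneg (ae_of_all _ fun ω => by positivity)
    (((hnoise_sum_int.add hdrift_sum_int).const_mul _).const_mul _)
    (ae_of_all _ fun ω => (h ω).sum_norm_sub_average_le hβ hrow hcol _ t)

variable [CompleteSpace E] [DecidableEq ι] [Nonempty ι] [IsProbabilityMeasure μ]

lemma integral_norm_sum_mixCLM_noise_le (hp1 : 1 ≤ p) (hp2 : p ≤ 2) (hσ : 0 ≤ σ)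
    {𝓕 : Filtration ℕ mΩ} {X : ℕ → ι → Ω → E}
    (hX : ∀ i, IsMartingaleDifference 𝓕 μ fun k => X k i)
    (hXp : ∀ k i, Integrable (fun ω => ‖X k i ω‖ ^ p) μ)
    (hXσ : ∀ k i, ∫ ω, ‖X k i ω‖ ^ p ∂μ ≤ σ ^ p) (W : Matrix ι ι ℝ) (t : ℕ) :
    ∫ ω, ‖∑ k ∈ Finset.range (t + 1), (mixCLM (W - averaging ι) ^ (t - k + 1))
        (WithLp.toLp 2 fun i => X k i ω)‖ ∂μ
      ≤ 2 * √2 * Fintype.card ι *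
        (∑ k ∈ Finset.range (t + 1), (mixingRate W ^ (t - k + 1)) ^ p) ^ (1 / p) * σ := by
  have hp0 : 0 < p := by linarith
  have hXLp (k : ℕ) (i : ι) : MemLp (X k i) (ENNReal.ofReal p) μ :=
    (memLp_ofReal_iff_integrable_norm_rpow ((hX i).integrable k).aestronglyMeasurable hp0).2
      (hXp k i)
  have hsum_nonneg : 0 ≤ ∑ k ∈ Finset.range (t + 1), (mixingRate W ^ (t - k + 1)) ^ p :=
    Finset.sum_nonneg fun k _ => Real.rpow_nonneg (pow_nonneg (mixingRate_nonneg W) _) p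
  exact ((IsMartingaleDifference.toLp hX).integral_norm_sum_clm_apply_le hp1 hp2
    (fun k => MemLp.of_eval_piLp (hXLp k))
    (fun k => integral_norm_toLp_rpow_le hp0 hp2 (hXLp k) (hXσ k))
    (fun k => norm_mixCLM_sub_averaging_pow_le W (t - k).succ_pos) (t + 1)).trans
    (one_add_mul_rpow_inv_le hp1 (by exact_mod_cast Fintype.card_pos) hsum_nonneg hσ)

theorem tracker_consensus_error_general (hp1 : 1 ≤ p) (hp2 : p ≤ 2) (hσ : 0 ≤ σ)
    {W : Matrix ι ι ℝ} (hrow : ∀ i, ∑ r, W i r = 1) (hcol : ∀ r, ∑ i, W i r = 1)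
    {β : ℝ} (hβ : β ∈ Set.Ioc (0 : ℝ) 1) {𝓕 : Filtration ℕ mΩ} {g v y G : ℕ → ι → Ω → E}
    (h : ∀ ω, IsMomentumTracker W β (fun t i => g t i ω) (fun t i => v t i ω) fun t i => y t i ω)
    (hgm : ∀ t i, AEStronglyMeasurable[𝓕 (t + 1)] (g t i) μ)
    (hg : ∀ t i, Integrable (g t i) μ) (hG : ∀ t i, μ[g t i | 𝓕 t] =ᵐ[μ] G t i)
    (hnoise_int : ∀ t i, Integrable (fun ω => ‖g t i ω - G t i ω‖ ^ p) μ)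
    (hnoise : ∀ t i, ∫ ω, ‖g t i ω - G t i ω‖ ^ p ∂μ ≤ σ ^ p) (t : ℕ) :
    (Fintype.card ι : ℝ)⁻¹ *
        ∫ ω, ∑ i, ‖y t i ω - (Fintype.card ι : ℝ)⁻¹ • ∑ j, y t j ω‖ ∂μ
      ≤ 2 * √2 * √(Fintype.card ι) * (1 / β - 1) *
          (∑ k ∈ Finset.range (t + 1), (mixingRate W ^ (t - k + 1)) ^ p) ^ (1 / p) * σ
        + (√(Fintype.card ι))⁻¹ * (1 / β - 1) *
          ∑ k ∈ Finset.range (t + 1), mixingRate W ^ (t - k + 1) *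
            ∫ ω, √(∑ i, ‖G k i ω - v k i ω‖ ^ 2) ∂μ := by
  have hnorm (k : ℕ) (ω : Ω) :
      √(∑ i, ‖G k i ω - v k i ω‖ ^ 2) = ‖WithLp.toLp 2 fun i => G k i ω - v k i ω‖ :=
    (PiLp.norm_eq_of_L2 (WithLp.toLp 2 _ : PiLp 2 fun _ : ι => E)).symm
  have hc : 0 ≤ 1 / β - 1 := sub_nonneg.2 (one_le_one_div hβ.1 hβ.2)
  have hG_int (k : ℕ) (i : ι) : Integrable (G k i) μ := integrable_condExp.congr (hG k i)
  have hmds (i : ι) : IsMartingaleDifference 𝓕 μ fun k ω => g k i ω - G k i ω :=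
    .sub_of_condExp_ae_eq (fun k => hgm k i) (fun k => hg k i) fun k => hG k i
  have hpath := integral_sum_norm_sub_average_le hrow hcol hβ h hg hG_int t
  have hmart := integral_norm_sum_mixCLM_noise_le hp1 hp2 hσ hmds hnoise_int hnoise W t
  simp only [hnorm]
  set n : ℝ := (Fintype.card ι : ℝ) with hn
  set L := (∑ k ∈ Finset.range (t + 1), (mixingRate W ^ (t - k + 1)) ^ p) ^ (1 / p)
  set D := ∑ k ∈ Finset.range (t + 1), mixingRate W ^ (t - k + 1) *
    ∫ ω, ‖WithLp.toLp 2 fun i => G k i ω - v k i ω‖ ∂μ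
  have hn_pos : 0 < n := by rw [hn]; positivity
  calc n⁻¹ * ∫ ω, ∑ i, ‖y t i ω - n⁻¹ • ∑ j, y t j ω‖ ∂μ
      ≤ n⁻¹ * (√n * ((1 / β - 1) * (2 * √2 * n * L * σ + D))) := by
        gcongr
        exact hpath.trans (by gcongr)
    _ = n⁻¹ * n * (2 * √2 * √n * (1 / β - 1) * L * σ) + √n / n * (1 / β - 1) * D := by ring
    _ = 2 * √2 * √n * (1 / β - 1) * L * σ + (√n)⁻¹ * (1 / β - 1) * D := by
        rw [inv_mul_cancel₀ hn_pos.ne', one_mul, Real.sqrt_div_self', one_div (√n)]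

end ConsensusError

/-- (Consensus errors of the gradient trackers.)  Under Assumptions 3–4
and GT-NSGDm with momentum parameter `β ∈ (0,1)`, for every `t` the consensus error of the
gradient trackers satisfies
`(1/n) E[∑ i, ‖y_i^t - ȳ^t‖] ≤ 2√2 n^{1/2} (1/β - 1) (∑_{k=0}^t λ^{(t-k+1)p})^{1/p} σ
  + (1/√n)(1/β - 1) ∑_{k=0}^t λ^{t-k+1} E[‖∇F(x^k) - v^k‖]`,
where `ȳ^t = (1/n) ∑ i, y_i^t` and `‖∇F(x^k) - v^k‖ = (∑ i, ‖∇f_i(x_i^k) - v_i^k‖²)^{1/2}`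
is the norm of the stacked vector in `ℝ^{nd}`.

The heavy-tailed noise Assumption 3 is formalized via a filtration `𝓕`: the iterates are
adapted, the stochastic gradients `g_i^t` are `𝓕 (t+1)`-measurable and integrable,
conditionally unbiased given `𝓕 t`, and have conditional `p`-th moment bounded by `σ^p`. -/
theorem tracker_consensus_error (d n : ℕ) (hn : 0 < n)
    (Ω : Type*) (mΩ : MeasurableSpace Ω) (μ : Measure Ω) (hμ : IsProbabilityMeasure μ)
    (f : Fin n → EuclideanSpace ℝ (Fin d) → ℝ)
    (gradf : Fin n → EuclideanSpace ℝ (Fin d) → EuclideanSpace ℝ (Fin d))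
    (hgrad : ∀ i z, HasGradientAt (f i) (gradf i z) z)
    (p σ : ℝ) (hp1 : 1 < p) (hp2 : p ≤ 2) (hσ : 0 ≤ σ)
    (W : Matrix (Fin n) (Fin n) ℝ)
    (hWnonneg : ∀ i r, 0 ≤ W i r)
    (hWprim : ∃ k : ℕ, 0 < k ∧ ∀ i r, (0 : ℝ) < (W ^ k : Matrix (Fin n) (Fin n) ℝ) i r)
    (hWrow : ∀ i, ∑ r, W i r = 1) (hWcol : ∀ r, ∑ i, W i r = 1)
    (lam : ℝ)
    (hlam : lam = ‖Matrix.toEuclideanCLM (𝕜 := ℝ) (n := Fin n)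
      (W - (n : ℝ)⁻¹ • Matrix.of (fun _ _ => (1 : ℝ)))‖)
    (hlam1 : lam < 1)
    (𝓕 : Filtration ℕ mΩ)
    (α β : ℝ) (hα : 0 < α) (hβ : β ∈ Set.Ioo (0 : ℝ) 1)
    (xbar0 : EuclideanSpace ℝ (Fin d))
    (x v y g : ℕ → Fin n → Ω → EuclideanSpace ℝ (Fin d))
    (hx0 : ∀ i ω, x 0 i ω = xbar0)
    (hv0 : ∀ i ω, v 0 i ω = (1 - β) • g 0 i ω)
    (hvrec : ∀ t i ω, v (t + 1) i ω = β • v t i ω + (1 - β) • g (t + 1) i ω)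
    (hy0 : ∀ i ω, y 0 i ω = ∑ r, W i r • v 0 r ω)
    (hyrec : ∀ t i ω, y (t + 1) i ω = ∑ r, W i r • (y t r ω + v (t + 1) r ω - v t r ω))
    (hxrec : ∀ t i ω, x (t + 1) i ω = ∑ r, W i r • (x t r ω - (α / ‖y t r ω‖) • y t r ω))
    (hadapt : ∀ i, Adapted 𝓕 fun t => x t i)
    (hgmeas : ∀ t i, StronglyMeasurable[𝓕 (t + 1)] (g t i))
    (hgint : ∀ t i, Integrable (g t i) μ)
    (hunbiased : ∀ t i, μ[g t i|𝓕 t] =ᵐ[μ] fun ω => gradf i (x t i ω))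
    (hmomint : ∀ t i, Integrable (fun ω => ‖g t i ω - gradf i (x t i ω)‖ ^ p) μ)
    (hmoment : ∀ t i, ∀ᵐ ω ∂μ,
      (μ[fun ω' => ‖g t i ω' - gradf i (x t i ω')‖ ^ p|𝓕 t]) ω ≤ σ ^ p) :
    ∀ t : ℕ,
      (n : ℝ)⁻¹ * ∫ ω, (∑ i, ‖y t i ω - (n : ℝ)⁻¹ • ∑ j, y t j ω‖) ∂μ ≤
        2 * Real.sqrt 2 * Real.sqrt n * (1 / β - 1) *
          (∑ k ∈ Finset.range (t + 1), (lam ^ (t - k + 1)) ^ p) ^ (1 / p) * σ +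
        (Real.sqrt n)⁻¹ * (1 / β - 1) *
          ∑ k ∈ Finset.range (t + 1), lam ^ (t - k + 1) *
            ∫ ω, Real.sqrt (∑ i, ‖gradf i (x k i ω) - v k i ω‖ ^ 2) ∂μ := by
  have : Nonempty (Fin n) := ⟨⟨0, hn⟩⟩
  subst hlam
  simpa only [mixingRate, averaging, Fintype.card_fin] using
    tracker_consensus_error_general hp1.le hp2 hσ hWrow hWcol (Set.Ioo_subset_Ioc_self hβ)
      (fun ω => ⟨(hv0 · ω), (hvrec · · ω), (hy0 · ω), (hyrec · · ω)⟩)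
      (fun t i => (hgmeas t i).aestronglyMeasurable) hgint hunbiased hmomint
      fun t i => integral_le_of_condExp_ae_le (𝓕.le t) (hmoment t i)
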